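/- arXiv:math/0506443 — 2 statements merged into one kernel-verified Lean document; each statement's English description precedes it below -/
import Mathlib

section
/- The subgroup of SL(2,ℤ) generated by the matrices A = [[1,1],[0,1]] and B⁴ = [[1,0],[-4,1]] has index exactly 12 in SL(2,ℤ). -/
/-- The matrix `A = [[1,1],[0,1]]` as an element of `SL(2,ℤ)`. -/
def A : Matrix.SpecialLinearGroup (Fin 2) ℤ :=
  ⟨!![1, 1; 0, 1], by norm_num [Matrix.det_fin_two_of]⟩

/-- The matrix `B = [[1,0],[-1,1]]` as an element of `SL(2,ℤ)`. -/
def B : Matrix.SpecialLinearGroup (Fin 2) ℤ :=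
  ⟨!![1, 0; -1, 1], by norm_num [Matrix.det_fin_two_of]⟩

/-!
The subgroup is the congruence subgroup `Γ₁(4)`. Right multiplication by `A ^ n` and by
`B ^ (4 * n)` changes the bottom row `(c, d)` of a matrix to `(c, d + n * c)` and
`(c - 4 * n * d, d)`. If `c ≡ 0` and `d ≡ 1` modulo `4`, then `|c| ≠ 2 * |d|`, so as long as
`c ≠ 0` one of the two moves with `n = ±1` shrinks `|c| + |d|`; a matrix of `Γ₁(4)` with `c = 0` is
a power of `A`.

Since reduction modulo `N` maps `SL(2, ℤ)` onto `SL(2, ℤ/N)`, and `Γ₁(N)` is the preimage of the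
stabilizer of the column vector `(1, 0)`, its index is the size of the orbit of that vector, which
consists of the pairs generating the unit ideal of `ℤ/N`.
-/

open CongruenceSubgroup Matrix.SpecialLinearGroup
open Matrix hiding zpow_mul
open scoped MatrixGroups

section OrbitOfFirstColumn

variable {R : Type*} [CommRing R]

lemma SL2_det_eq_one (g : SL(2, R)) : g 0 0 * g 1 1 - g 0 1 * g 1 0 = 1 := by
  rw [← det_fin_two, g.det_coe]

lemma SL2_smul_vec_one_zero (g : SL(2, R)) : g • ![(1 : R), 0] = ![g 0 0, g 1 0] := by
  change g.1 *ᵥ ![1, 0] = _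
  ext i
  fin_cases i <;> simp [mulVec, dotProduct]

lemma SL2_orbit_vec_one_zero :
    MulAction.orbit SL(2, R) ![(1 : R), 0] = {v | IsCoprime (v 0) (v 1)} := by
  ext v
  simp only [MulAction.mem_orbit_iff, SL2_smul_vec_one_zero, Set.mem_ofPred_eq]
  constructor
  · rintro ⟨g, rfl⟩
    exact g.isCoprime_col 0
  · intro hv
    obtain ⟨g, h₀, h₁⟩ := hv.exists_SL2_col 0
    exact ⟨g, by ext i; fin_cases i <;> simp [h₀, h₁]⟩

end OrbitOfFirstColumn

lemma exists_isCoprime_add_mul {a b m : ℤ} (hb : b ≠ 0) (h : IsCoprime a (Int.gcd b m)) :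
    ∃ k : ℤ, IsCoprime (a + k * m) b := by
  have : NeZero b.natAbs := ⟨Int.natAbs_ne_zero.2 hb⟩
  have hdvd : Int.gcd b m ∣ b.natAbs := Nat.gcd_dvd_left _ _
  -- Lift `a`, a unit modulo `gcd b m`, to a unit `c` modulo `b`.
  obtain ⟨u, hu⟩ := ZMod.unitsMap_surjective hdvd (ZMod.unitOfIsCoprime a h)
  obtain ⟨c, hc⟩ := ZMod.intCast_surjective (u : ZMod b.natAbs)
  have hcb : IsCoprime c b := by
    have := (ZMod.coe_int_isUnit_iff_isCoprime c b.natAbs).1 (hc ▸ u.isUnit)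
    exact (this.of_isCoprime_of_dvd_left Int.dvd_natAbs_self).symm
  have hca : (Int.gcd b m : ℤ) ∣ c - a := by
    rw [← ZMod.intCast_eq_intCast_iff_dvd_sub]
    have := congrArg Units.val hu
    simpa [ZMod.unitsMap_def, ← hc] using this.symm
  obtain ⟨z, hz⟩ := hca
  have hk : a + Int.gcdB b m * z * m = c + b * (-(Int.gcdA b m * z)) := by
    linear_combination -hz - z * Int.gcd_eq_gcd_ab b m
  exact ⟨Int.gcdB b m * z, hk ▸ hcb.add_mul_left_left _⟩

lemma exists_isCoprime_intCast_eq {N : ℕ} {a b : ZMod N} (h : IsCoprime a b) :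
    ∃ c d : ℤ, IsCoprime c d ∧ (c : ZMod N) = a ∧ (d : ZMod N) = b := by
  obtain rfl | hN := N.eq_zero_or_pos
  · exact ⟨a, b, h, Int.cast_id, Int.cast_id⟩
  obtain ⟨c, rfl⟩ := ZMod.intCast_surjective a
  obtain ⟨d, hd, rfl⟩ : ∃ d : ℤ, d ≠ 0 ∧ (d : ZMod N) = b := by
    have : NeZero N := ⟨hN.ne'⟩
    exact ⟨b.val + N, by positivity, by simp⟩
  obtain ⟨x, y, hxy⟩ := h
  obtain ⟨x, rfl⟩ := ZMod.intCast_surjective x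
  obtain ⟨y, rfl⟩ := ZMod.intCast_surjective y
  have hdvd : (N : ℤ) ∣ 1 - (x * c + y * d) := by
    rw [← ZMod.intCast_eq_intCast_iff_dvd_sub]
    exact_mod_cast hxy
  have hgcd : (Int.gcd d N : ℤ) ∣ 1 - x * c := by
    have := ((Int.gcd_dvd_right d N).trans hdvd).add ((Int.gcd_dvd_left d N).mul_left y)
    rwa [show 1 - (x * c + y * d) + y * d = 1 - x * c by ring] at this
  obtain ⟨z, hz⟩ := hgcd
  have hcop : IsCoprime c (Int.gcd d N) := ⟨x, z, by linear_combination -hz⟩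
  obtain ⟨k, hk⟩ := exists_isCoprime_add_mul hd hcop
  exact ⟨c + k * N, d, hk, by simp, rfl⟩

theorem SL2_reduction_mod_surjective (N : ℕ) :
    Function.Surjective (SpecialLinearGroup.map (n := Fin 2) (Int.castRingHom (ZMod N))) := by
  intro g
  obtain ⟨a, c, hac, ha, hc⟩ := exists_isCoprime_intCast_eq (g.isCoprime_col 0)
  obtain ⟨h, rfl, rfl⟩ := hac.exists_SL2_col 0
  -- `h` and `g` agree in the first column modulo `N`, so `h⁻¹ * g` is unipotent; `k` lifts its
  -- upper right entry.
  obtain ⟨k, hk⟩ := ZMod.intCast_surjective (h 1 1 * g 0 1 - h 0 1 * g 1 1 : ZMod N)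
  have hg := SL2_det_eq_one g
  have hh : (g 0 0 * h 1 1 - h 0 1 * g 1 0 : ZMod N) = 1 := by
    rw [← ha, ← hc]
    exact_mod_cast congrArg (Int.cast : ℤ → ZMod N) (SL2_det_eq_one h)
  refine ⟨h * ModularGroup.T ^ k, ?_⟩
  ext i j
  rw [SL_reduction_mod_hom_val, coe_mul, ModularGroup.coe_T_zpow]
  fin_cases i <;> fin_cases j <;> simp [mul_apply, Fin.sum_univ_two, hk, ha, hc]
  · linear_combination g 0 1 * hh - h 0 1 * hg
  · linear_combination g 1 1 * hh - h 1 1 * hg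

lemma Gamma1_eq_comap_stabilizer (N : ℕ) :
    Gamma1 N = (MulAction.stabilizer SL(2, ZMod N) ![(1 : ZMod N), 0]).comap
      (SpecialLinearGroup.map (Int.castRingHom (ZMod N))) := by
  ext g
  rw [Subgroup.mem_comap, MulAction.mem_stabilizer_iff, SL2_smul_vec_one_zero, Gamma1_mem]
  simp only [SL_reduction_mod_hom_val, vecCons_inj, and_true]
  refine ⟨fun ⟨ha, _, hc⟩ ↦ ⟨ha, hc⟩, fun ⟨ha, hc⟩ ↦ ⟨ha, ?_, hc⟩⟩
  have hdet : (g 0 0 * g 1 1 - g 0 1 * g 1 0 : ZMod N) = 1 := by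
    exact_mod_cast congrArg (Int.cast : ℤ → ZMod N) (SL2_det_eq_one g)
  rwa [ha, hc, mul_zero, sub_zero, one_mul] at hdet

theorem index_Gamma1 (N : ℕ) :
    (Gamma1 N).index = {v : Fin 2 → ZMod N | IsCoprime (v 0) (v 1)}.ncard := by
  rw [Gamma1_eq_comap_stabilizer,
    Subgroup.index_comap_of_surjective _ (SL2_reduction_mod_surjective N),
    MulAction.index_stabilizer, SL2_orbit_vec_one_zero]

lemma ncard_isCoprime_zmod_four :
    {v : Fin 2 → ZMod 4 | IsCoprime (v 0) (v 1)}.ncard = 12 := by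
  simp only [IsCoprime]
  rw [Set.ncard_eq_toFinset_card']
  decide

lemma dvd_apply_one_zero_of_mem_Gamma1 {N : ℕ} {g : SL(2, ℤ)} (hg : g ∈ Gamma1 N) :
    (N : ℤ) ∣ g 1 0 :=
  (ZMod.intCast_zmod_eq_zero_iff_dvd _ _).1 ((Gamma1_mem N g).1 hg).2.2

lemma dvd_apply_one_one_sub_one_of_mem_Gamma1 {N : ℕ} {g : SL(2, ℤ)} (hg : g ∈ Gamma1 N) :
    (N : ℤ) ∣ g 1 1 - 1 := by
  rw [← ZMod.intCast_zmod_eq_zero_iff_dvd, Int.cast_sub, Int.cast_one, sub_eq_zero]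
  exact ((Gamma1_mem N g).1 hg).2.1

lemma apply_one_one_eq_one_of_mem_Gamma1 {N : ℕ} (hN : 3 ≤ N) {g : SL(2, ℤ)}
    (hg : g ∈ Gamma1 N) (hc : g 1 0 = 0) : g 1 1 = 1 := by
  have hunit : IsUnit (g 1 1) := by simpa [hc, isCoprime_zero_left] using g.isCoprime_row 1
  refine (Int.isUnit_iff.1 hunit).resolve_right fun hd ↦ ?_
  have hdvd : (N : ℤ) ∣ 2 := by
    simpa [hd] using (dvd_apply_one_one_sub_one_of_mem_Gamma1 hg).neg_right
  have := Int.le_of_dvd two_pos hdvd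
  omega

lemma coe_A_zpow (n : ℤ) : (A ^ n).1 = !![1, n; 0, 1] :=
  ModularGroup.coe_T_zpow n

lemma coe_B_zpow (n : ℤ) : (B ^ n).1 = !![1, 0; -n, 1] := by
  have hB : B = ModularGroup.S * A * ModularGroup.S⁻¹ := by decide
  simp [hB, conj_zpow, coe_A_zpow, ModularGroup.coe_S, coe_inv, adjugate_fin_two]

lemma mul_A_zpow_apply_one_zero (g : SL(2, ℤ)) (n : ℤ) : (g * A ^ n) 1 0 = g 1 0 := by
  simp [coe_A_zpow, mul_apply, Fin.sum_univ_two]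

lemma mul_A_zpow_apply_one_one (g : SL(2, ℤ)) (n : ℤ) :
    (g * A ^ n) 1 1 = g 1 0 * n + g 1 1 := by
  simp [coe_A_zpow, mul_apply, Fin.sum_univ_two]

lemma mul_B_zpow_apply_one_zero (g : SL(2, ℤ)) (n : ℤ) :
    (g * B ^ n) 1 0 = g 1 0 - g 1 1 * n := by
  simp [coe_B_zpow, mul_apply, Fin.sum_univ_two, sub_eq_add_neg]

lemma mul_B_zpow_apply_one_one (g : SL(2, ℤ)) (n : ℤ) : (g * B ^ n) 1 1 = g 1 1 := by
  simp [coe_B_zpow, mul_apply, Fin.sum_univ_two]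

lemma eq_A_zpow_of_apply_one {g : SL(2, ℤ)} (hc : g 1 0 = 0) (hd : g 1 1 = 1) :
    g = A ^ g 0 1 := by
  have ha : g 0 0 = 1 := by simpa [hc, hd] using SL2_det_eq_one g
  ext i j
  fin_cases i <;> fin_cases j <;> simp [coe_A_zpow, ha, hc, hd]

lemma closure_A_B_pow_le_Gamma1 (N : ℕ) : Subgroup.closure {A, B ^ N} ≤ Gamma1 N := by
  rw [Subgroup.closure_le, Set.pair_subset_iff]
  constructor
  · exact (Gamma1_mem N A).2 (by simp [A])
  · simp [← zpow_natCast, coe_B_zpow]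

lemma exists_natAbs_bottom_row_lt {N : ℕ} (hN : N = 3 ∨ N = 4) {c d : ℤ} (hc₀ : c ≠ 0)
    (hc : (N : ℤ) ∣ c) (hd : (N : ℤ) ∣ d - 1) :
    ∃ n : ℤ, (c * n + d).natAbs < d.natAbs ∨ (c - d * (N * n)).natAbs < c.natAbs := by
  suffices ((c + d).natAbs < d.natAbs ∨ (c - d * N).natAbs < c.natAbs) ∨
      ((-c + d).natAbs < d.natAbs ∨ (c + d * N).natAbs < c.natAbs) by
    rcases this with h | h
    · exact ⟨1, by simpa using h⟩
    · exact ⟨-1, by simpa using h⟩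
  have hne : c.natAbs ≠ 2 * d.natAbs := by
    rcases hN with rfl | rfl <;> omega
  obtain hlt | hlt := hne.lt_or_gt
  · have : (c + d).natAbs < d.natAbs ∨ (-c + d).natAbs < d.natAbs := by omega
    tauto
  · have : (c - d * N).natAbs < c.natAbs ∨ (c + d * N).natAbs < c.natAbs := by
      rcases hN with rfl | rfl <;> omega
    tauto

theorem Gamma1_le_closure_A_B_pow {N : ℕ} (hN : N = 3 ∨ N = 4) :
    Gamma1 N ≤ Subgroup.closure {A, B ^ N} := by
  have hA (n : ℤ) : A ^ n ∈ Subgroup.closure {A, B ^ N} :=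
    zpow_mem (Subgroup.subset_closure (by simp)) n
  have hB (n : ℤ) : B ^ (N * n) ∈ Subgroup.closure {A, B ^ N} := by
    rw [zpow_mul, zpow_natCast]
    exact zpow_mem (Subgroup.subset_closure (by simp)) n
  intro g hg
  induction hs : (g 1 0).natAbs + (g 1 1).natAbs using Nat.strong_induction_on generalizing g with
  | _ s ih =>
    have descend {h : SL(2, ℤ)} (hh : h ∈ Subgroup.closure {A, B ^ N})
        (hlt : ((g * h) 1 0).natAbs + ((g * h) 1 1).natAbs < s) :
        g ∈ Subgroup.closure {A, B ^ N} :=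
      (Subgroup.mul_mem_cancel_right _ hh).1
        (ih _ hlt (mul_mem hg (closure_A_B_pow_le_Gamma1 N hh)) rfl)
    by_cases hc : g 1 0 = 0
    · rw [eq_A_zpow_of_apply_one hc (apply_one_one_eq_one_of_mem_Gamma1 (by omega) hg hc)]
      exact hA _
    · obtain ⟨n, hn | hn⟩ := exists_natAbs_bottom_row_lt hN hc
        (dvd_apply_one_zero_of_mem_Gamma1 hg) (dvd_apply_one_one_sub_one_of_mem_Gamma1 hg)
      · refine descend (hA n) ?_
        rw [mul_A_zpow_apply_one_zero, mul_A_zpow_apply_one_one]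
        omega
      · refine descend (hB n) ?_
        rw [mul_B_zpow_apply_one_zero, mul_B_zpow_apply_one_one]
        omega

theorem closure_A_B_pow_eq_Gamma1 {N : ℕ} (hN : N = 3 ∨ N = 4) :
    Subgroup.closure {A, B ^ N} = Gamma1 N :=
  (closure_A_B_pow_le_Gamma1 N).antisymm (Gamma1_le_closure_A_B_pow hN)

/-- The subgroup of `SL(2,ℤ)` generated by `A` and `B⁴` has index exactly 12. -/
theorem subgroup_A_Bfourth_index_eq_twelve :
    (Subgroup.closure ({A, B ^ 4} : Set (Matrix.SpecialLinearGroup (Fin 2) ℤ))).index = 12 := by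
  rw [closure_A_B_pow_eq_Gamma1 (.inr rfl), index_Gamma1, ncard_isCoprime_zmod_four]
end

section
/- Let F be the free group on two generators x and y, let ρ : F → SL(2,ℤ) be the homomorphism sending x to A = [[1,1],[0,1]] and y to B = [[1,0],[-1,1]], and let e : F → ℤ be the homomorphism sending both x and y to 1 (the total exponent sum). Then for every w in F with ρ(w) = 1, the integer e(w) is divisible by 12. -/
/-- The homomorphism from the free group on two generators to `SL(2,ℤ)`
sending the first generator to `A` and the second to `B`. -/
def ρ : FreeGroup (Fin 2) →* Matrix.SpecialLinearGroup (Fin 2) ℤ :=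
  FreeGroup.lift (fun i => if i = 0 then A else B)

/-- The total exponent sum homomorphism on the free group on two generators,
sending both generators to `1 ∈ ℤ`. -/
def e : FreeGroup (Fin 2) →* Multiplicative ℤ :=
  FreeGroup.lift (fun _ => Multiplicative.ofAdd (1 : ℤ))

/-!
The square of the Dedekind eta function satisfies `η²(z + 1) = ζ η²(z)` with `ζ = exp (2πi / 12)`
and `η²(-1 / z) = -i z η²(z)`, so the weight `1` slash action of `SL(2, ℤ)` multiplies `η²` by
scalars. As `A = T` and `B = S T S⁻¹` are conjugate, both multiply it by `ζ`, and a word `w`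
multiplies it by `ζ ^ e(w)`. If `ρ(w) = 1` then `ζ ^ e(w) = 1` because `η² ≠ 0`, and `ζ` has
order `12`.
-/

open ModularForm MatrixGroups
open Complex hiding eta
open UpperHalfPlane hiding I ρ
open Function.Periodic (qParam)
open scoped Real

section SlashEigenfunction

variable {f : ℍ → ℂ} {k : ℤ} {γ δ : SL(2, ℤ)} {c d : ℂ}

lemma slash_mul_eq_smul (hγ : f ∣[k] γ = c • f) (hδ : f ∣[k] δ = d • f) :
    f ∣[k] (γ * δ) = (c * d) • f := by
  rw [SlashAction.slash_mul, hγ, SL_smul_slash, hδ, smul_smul]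

lemma slash_inv_eq_inv_smul (hc : c ≠ 0) (hγ : f ∣[k] γ = c • f) :
    f ∣[k] γ⁻¹ = c⁻¹ • f := by
  rw [eq_inv_smul_iff₀ hc, ← SL_smul_slash, ← hγ, ← SlashAction.slash_mul, mul_inv_cancel,
    SlashAction.slash_one]

lemma slash_conj_eq_smul (hc : c ≠ 0) (hγ : f ∣[k] γ = c • f) (hδ : f ∣[k] δ = d • f) :
    f ∣[k] (γ * δ * γ⁻¹) = d • f := by
  simpa [mul_comm c d, hc] using
    slash_mul_eq_smul (slash_mul_eq_smul hγ hδ) (slash_inv_eq_inv_smul hc hγ)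

lemma slash_ρ_eq_zpow_smul (hc : c ≠ 0) (hA : f ∣[k] A = c • f) (hB : f ∣[k] B = c • f)
    (w : FreeGroup (Fin 2)) : f ∣[k] ρ w = c ^ (e w).toAdd • f := by
  induction w using FreeGroup.induction_on with
  | C1 => simp
  | of i => fin_cases i <;> simpa [ρ, e]
  | inv_of i ih => simpa using slash_inv_eq_inv_smul (zpow_ne_zero _ hc) ih
  | mul v w hv hw => simpa [zpow_add₀ hc] using slash_mul_eq_smul hv hw

end SlashEigenfunction

lemma A_eq_T : A = ModularGroup.T := rfl

lemma B_eq_S_mul_T_mul_S_inv : B = ModularGroup.S * ModularGroup.T * ModularGroup.S⁻¹ := by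
  decide

lemma qParam_add (h : ℝ) (z w : ℂ) : qParam h (z + w) = qParam h z * qParam h w := by
  rw [qParam, qParam, qParam, ← exp_add]
  ring_nf

lemma eta_add_one (z : ℂ) : η (z + 1) = exp (2 * π * I / 24) * η z := by
  have qParam_one_periodic : qParam 1 (z + 1) = qParam 1 z := by
    rw [qParam_add]
    simp [qParam]
  rw [ModularForm.eta, ModularForm.eta, qParam_add, mul_comm (qParam 24 z), mul_assoc]
  simp only [eta_q, qParam_one_periodic]
  simp [qParam]

lemma eta_neg_inv_sq (z : ℍ) : η (-(z : ℂ)⁻¹) ^ 2 = -I * z * η z ^ 2 := by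
  have sq_sqrt (w : ℂ) : sqrt w ^ 2 = w := by simp [sqrt]
  have eta_neg_inv : η (-(z : ℂ)⁻¹) = (sqrt I)⁻¹ * (sqrt z * η z) := by
    simpa [neg_div] using eta_comp_eq_csqrt_I_inv z.2
  rw [eta_neg_inv, mul_pow, mul_pow, inv_pow, sq_sqrt, sq_sqrt, inv_I, mul_assoc]

/-- The square `η²` of the Dedekind eta function, as a function on the upper half-plane; it is a
modular form of weight `1` with a multiplier system of order `12`. -/
noncomputable def etaSq (z : ℍ) : ℂ := η z ^ 2

lemma etaSq_ne_zero : etaSq ≠ 0 := fun h ↦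
  pow_ne_zero 2 (eta_ne_zero UpperHalfPlane.I.2) (congrFun h UpperHalfPlane.I)

lemma etaSq_slash_T : etaSq ∣[(1 : ℤ)] ModularGroup.T = exp (2 * π * I / 12) • etaSq := by
  ext z
  have exp_sq : exp (2 * π * I / 24) ^ 2 = exp (2 * π * I / 12) := by
    rw [← exp_nat_mul]
    ring_nf
  rw [SL_slash_apply, modular_T_smul]
  simp [denom, etaSq, add_comm (1 : ℂ), eta_add_one, mul_pow, exp_sq]

lemma etaSq_slash_S : etaSq ∣[(1 : ℤ)] ModularGroup.S = (-I) • etaSq := by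
  ext z
  rw [SL_slash_apply, modular_S_smul, ModularGroup.denom_S]
  simp [etaSq, eta_neg_inv_sq, mul_right_comm _ (z : ℂ), z.ne_zero]

lemma etaSq_slash_ρ (w : FreeGroup (Fin 2)) :
    etaSq ∣[(1 : ℤ)] ρ w = exp (2 * π * I / 12) ^ (e w).toAdd • etaSq := by
  refine slash_ρ_eq_zpow_smul (exp_ne_zero _) ?_ ?_ w
  · rw [A_eq_T, etaSq_slash_T]
  · rw [B_eq_S_mul_T_mul_S_inv]
    exact slash_conj_eq_smul (neg_ne_zero.mpr I_ne_zero) etaSq_slash_S etaSq_slash_T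

/-- If a word in `A, B` represents the identity in `SL(2,ℤ)`, then its total
exponent sum is divisible by 12. -/
theorem twelve_dvd_exponent_sum_of_relator (w : FreeGroup (Fin 2)) (hw : ρ w = 1) :
    (12 : ℤ) ∣ Multiplicative.toAdd (e w) := by
  have hζ : IsPrimitiveRoot (exp (2 * π * I / 12)) 12 :=
    mod_cast isPrimitiveRoot_exp 12 (by norm_num)
  have h_smul : exp (2 * π * I / 12) ^ (e w).toAdd • etaSq = (1 : ℂ) • etaSq := by
    rw [← etaSq_slash_ρ, hw, SlashAction.slash_one, one_smul]
  exact (hζ.zpow_eq_one_iff_dvd _).mp (smul_left_injective ℂ etaSq_ne_zero h_smul)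
end
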